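/- In the semidirect-product setup G = F ⋊ ⟨τ⟩ with subsets X1, X2, X3, X4, S ⊆ G built from an ordering A_0, ..., A_{l−1} of the F_q-hyperplanes of F, assume the ordering is chosen so that S = ⋃_{i=0}^{l−1}(F\A_i)τ^i is inverse-closed in G. Then each of the sets {1_G}, X1, X2, X3, X4 is inverse-closed, the ℤ-submodule of the group algebra MonoidAlgebra ℤ G spanned by the five elements underline({1_G}), underline(X1), underline(X2), underline(X3), underline(X4) is closed under multiplication (i.e. it is a subring of MonoidAlgebra ℤ G, an S-ring of rank 5 over G), and moreover {g ∈ G : g·X3 = X3} = {1_G} and {g ∈ G : g·X4 = X4} = {1_G}. -/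

import Mathlib

open Classical

/-- The element `underline Y = Σ_{y ∈ Y} y` of the group algebra `MonoidAlgebra ℤ G`
attached to a subset `Y` of a finite group `G`. -/
noncomputable def underline {G : Type*} [Group G] [Fintype G] (Y : Set G) :
    MonoidAlgebra ℤ G :=
  ∑ y ∈ Y.toFinset, MonoidAlgebra.single y (1 : ℤ)

/-!
Write `H t` for the hyperplane attached to an element `t` of the complement, viewed inside `N = F`,
and `D = ⋃ (H t) t` for the complement of `S`. Inverse-closedness of `D` means `(H t) t = t H(t⁻¹)`,
so in `ℤ[G]` the element `D` is both `∑ H t · t` and `∑ t⁻¹ · H t`. Hence every product of two of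
`1, H 1, N, D, G` reduces to products `H t · H u`, which are multiples of `N` when `t ≠ u` and of
`H t` when `t = u`; in `D · D` the diagonal terms add up to `∑ H t`, a combination of `N` and `1`
because all nonzero vectors lie on equally many hyperplanes. These five elements span the same
lattice as `1, X1, …, X4`. An element stabilizing `X3` or `X4` lies in `N`, hence in every
hyperplane other than `H 1`, and these meet trivially.
-/

section GroupAlgebra

open MonoidAlgebra
open scoped Pointwise

lemma natCard_mul_eq_inf {G : Type*} [Group G] (H K : Subgroup G) {g : G}
    (hg : g ∈ (H : Set G) * K) :
    Nat.card {p : H × K // (p.1 : G) * p.2 = g} = Nat.card ↥(H ⊓ K) := by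
  obtain ⟨h, hh, k, hk, rfl⟩ := hg
  refine Nat.card_congr
    { toFun := fun p ↦ ⟨h⁻¹ * p.1.1, H.mul_mem (H.inv_mem hh) p.1.1.2, ?_⟩
      invFun := fun x ↦ ⟨(⟨h * x, H.mul_mem hh x.2.1⟩,
        ⟨(x : G)⁻¹ * k, K.mul_mem (K.inv_mem x.2.2) hk⟩), by simp [mul_assoc]⟩
      left_inv := fun ⟨⟨a, b⟩, hab⟩ ↦ ?_
      right_inv := fun x ↦ by simp }
  · have : h⁻¹ * p.1.1 = k * (p.1.2 : G)⁻¹ := by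
      rw [inv_mul_eq_iff_eq_mul, ← mul_assoc, eq_mul_inv_iff_mul_eq, p.2]
    rw [this]
    exact K.mul_mem hk (K.inv_mem p.1.2.2)
  · have : (b : G) = (a : G)⁻¹ * h * k := by rw [mul_assoc, eq_inv_mul_iff_mul_eq, hab]
    simp [Subtype.ext_iff, this, mul_assoc]

variable {G : Type*} [Group G] [Fintype G]

lemma underline_eq_sum (Y : Set G) : underline Y = ∑ y ∈ Y.toFinite.toFinset, of ℤ G y := by
  rw [underline, Set.Finite.toFinset_eq_toFinset]
  rfl

lemma underline_coeff (Y : Set G) (g : G) : (underline Y).coeff g = if g ∈ Y then 1 else 0 := by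
  simp [underline, Finsupp.single_apply]

lemma underline_singleton (g : G) : underline {g} = of ℤ G g := by
  simp [underline_eq_sum]

lemma underline_one : underline {(1 : G)} = 1 := by
  rw [underline_singleton, map_one]

lemma underline_sdiff {Y Z : Set G} (h : Z ⊆ Y) :
    underline (Y \ Z) = underline Y - underline Z := by
  ext g
  have hg := @h g
  by_cases hY : g ∈ Y <;> by_cases hZ : g ∈ Z <;> simp_all [underline_coeff]

lemma underline_iUnion {ι : Type*} [Fintype ι] {Y : ι → Set G}
    (h : Pairwise (Function.onFun Disjoint Y)) :
    underline (⋃ i, Y i) = ∑ i, underline (Y i) := by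
  have hY : (⋃ i, Y i).toFinite.toFinset =
      Finset.univ.biUnion fun i ↦ (Y i).toFinite.toFinset := by ext; simp
  simp only [underline_eq_sum]
  rw [hY, Finset.sum_biUnion]
  exact fun i _ j _ hij ↦ by simpa [Function.onFun] using h hij

lemma of_mul_underline (g : G) (Y : Set G) :
    of ℤ G g * underline Y = underline ({g} * Y) := by
  have hY : ({g} * Y).toFinite.toFinset = Y.toFinite.toFinset.image (g * ·) := by ext; simp
  simp only [underline_eq_sum]
  rw [hY, Finset.sum_image (mul_right_injective g).injOn, Finset.mul_sum]
  simp only [map_mul]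

lemma underline_mul_of (Y : Set G) (g : G) :
    underline Y * of ℤ G g = underline (Y * {g}) := by
  have hY : (Y * {g}).toFinite.toFinset = Y.toFinite.toFinset.image (· * g) := by ext; simp
  simp only [underline_eq_sum]
  rw [hY, Finset.sum_image (mul_left_injective g).injOn, Finset.sum_mul]
  simp only [map_mul]

lemma of_inv_mul_underline_mul_of {g : G} {Y Z : Set G} (h : Y * {g} = {g} * Z) :
    of ℤ G g⁻¹ * underline Y * of ℤ G g = underline Z := by
  rw [mul_assoc, underline_mul_of, h, ← of_mul_underline, ← mul_assoc, ← map_mul, inv_mul_cancel,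
    map_one, one_mul]

lemma underline_mul_of_singleton_mul_eq {Y Z : Set G} (h : ∀ y ∈ Y, {y} * Z = Z) :
    underline Y * underline Z = Y.ncard • underline Z := by
  rw [underline_eq_sum Y, Finset.sum_mul, Set.ncard_eq_toFinset_card Y]
  exact Finset.sum_eq_card_nsmul fun y hy ↦ by
    rw [of_mul_underline, h y (Y.toFinite.mem_toFinset.1 hy)]

lemma underline_mul_of_mul_singleton_eq {Y Z : Set G} (h : ∀ z ∈ Z, Y * {z} = Y) :
    underline Y * underline Z = Z.ncard • underline Y := by
  rw [underline_eq_sum Z, Finset.mul_sum, Set.ncard_eq_toFinset_card Z]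
  exact Finset.sum_eq_card_nsmul fun z hz ↦ by
    rw [underline_mul_of, h z (Z.toFinite.mem_toFinset.1 hz)]

lemma underline_mul_underline_univ (Y : Set G) :
    underline Y * underline Set.univ = Y.ncard • underline (Set.univ : Set G) :=
  underline_mul_of_singleton_mul_eq fun y _ ↦ by
    rw [Set.singleton_mul, Set.image_univ_of_surjective (mul_left_surjective y)]

lemma underline_univ_mul_underline (Y : Set G) :
    underline Set.univ * underline Y = Y.ncard • underline (Set.univ : Set G) :=
  underline_mul_of_mul_singleton_eq fun y _ ↦ by
    rw [Set.mul_singleton, Set.image_univ_of_surjective (mul_right_surjective y)]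

lemma underline_subgroup_mul_of_le {H K : Subgroup G} (h : H ≤ K) :
    underline (H : Set G) * underline (K : Set G) = Nat.card H • underline (K : Set G) :=
  underline_mul_of_singleton_mul_eq fun _ hy ↦ Subgroup.singleton_mul_subgroup (h hy)

lemma underline_subgroup_mul_of_ge {H K : Subgroup G} (h : K ≤ H) :
    underline (H : Set G) * underline (K : Set G) = Nat.card K • underline (H : Set G) :=
  underline_mul_of_mul_singleton_eq fun _ hy ↦ Subgroup.subgroup_mul_singleton (h hy)

lemma underline_subgroup_mul_underline (H K : Subgroup G) :
    underline (H : Set G) * underline (K : Set G) =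
      Nat.card ↥(H ⊓ K) • underline ((H : Set G) * (K : Set G)) := by
  have hsum (L : Subgroup G) : underline (L : Set G) = ∑ x : L, of ℤ G x := by
    rw [underline_eq_sum]
    exact Finset.sum_subtype _ (by simp) _
  have hmaps : ∀ p ∈ (Finset.univ : Finset (H × K)),
      (p.1 : G) * p.2 ∈ ((H : Set G) * (K : Set G)).toFinite.toFinset := fun p _ ↦
    (Set.Finite.mem_toFinset _).2 (Set.mul_mem_mul p.1.2 p.2.2)
  rw [hsum H, hsum K, Finset.sum_mul_sum, ← Fintype.sum_prod_type']
  simp only [← map_mul]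
  rw [← Finset.sum_fiberwise_of_maps_to' hmaps (of ℤ G), underline_eq_sum, Finset.smul_sum]
  refine Finset.sum_congr rfl fun g hg ↦ ?_
  rw [Finset.sum_const, ← natCard_mul_eq_inf H K ((Set.Finite.mem_toFinset _).1 hg),
    Nat.card_eq_fintype_card, Fintype.card_subtype]

end GroupAlgebra

section Span

lemma mul_mem_span_of_forall_mul_mem {R A : Type*} [CommSemiring R] [Semiring A] [Algebra R A]
    {B : Set A} (hB : ∀ x ∈ B, ∀ y ∈ B, x * y ∈ Submodule.span R B) {a b : A}
    (ha : a ∈ Submodule.span R B) (hb : b ∈ Submodule.span R B) :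
    a * b ∈ Submodule.span R B := by
  have hle : Submodule.span R B * Submodule.span R B ≤ Submodule.span R B := by
    rw [Submodule.span_mul_span, Submodule.span_le]
    rintro _ ⟨x, hx, y, hy, rfl⟩
    exact hB x hx y hy
  exact hle (Submodule.mul_mem_mul ha hb)

lemma span_differences_eq_span {R M : Type*} [Ring R] [AddCommGroup M] [Module R M]
    (a b c d e : M) :
    Submodule.span R {a, b - a, c - b, d - b, e - c - (d - b)} =
      Submodule.span R {a, b, c, d, e} := by
  refine Submodule.span_eq_span ?_ ?_
  · have hmem : ∀ x ∈ ({a, b, c, d, e} : Set M), x ∈ Submodule.span R {a, b, c, d, e} :=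
      fun _ hx ↦ Submodule.subset_span hx
    simp only [Set.mem_insert_iff, Set.mem_singleton_iff, forall_eq_or_imp, forall_eq] at hmem
    obtain ⟨ha, hb, hc, hd, he⟩ := hmem
    rintro x (rfl | rfl | rfl | rfl | rfl)
    exacts [ha, sub_mem hb ha, sub_mem hc hb, sub_mem hd hb,
      sub_mem (sub_mem he hc) (sub_mem hd hb)]
  · set P := Submodule.span R {a, b - a, c - b, d - b, e - c - (d - b)} with hP
    have hmem : ∀ x ∈ ({a, b - a, c - b, d - b, e - c - (d - b)} : Set M), x ∈ P :=
      fun _ hx ↦ Submodule.subset_span hx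
    simp only [Set.mem_insert_iff, Set.mem_singleton_iff, forall_eq_or_imp, forall_eq] at hmem
    obtain ⟨ha, hba, hcb, hdb, he⟩ := hmem
    have hb : b ∈ P := by simpa using add_mem hba ha
    have hc : c ∈ P := by simpa using add_mem hcb hb
    have hd : d ∈ P := by simpa using add_mem hdb hb
    have hec : e - c ∈ P := by simpa using add_mem he hdb
    rintro x (rfl | rfl | rfl | rfl | rfl)
    exacts [ha, hb, hc, hd, by simpa using add_mem hec hc]

end Span

section HyperplaneFamily

open MonoidAlgebra
open scoped Pointwise

variable {G T : Type*} [Group G]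

/-- The union of the cosets `H t * s t`: for `H t = A_t` and `s t = τ^t` this is the complement
of the paper's set `S`. -/
def twistedUnion (s : T → G) (H : T → Subgroup G) : Set G := ⋃ t, (H t : Set G) * {s t}

lemma mem_twistedUnion {s : T → G} {H : T → Subgroup G} {g : G} :
    g ∈ twistedUnion s H ↔ ∃ t, ∃ h ∈ H t, h * s t = g := by
  simp only [twistedUnion, Set.mem_iUnion, Set.mem_mul, Set.mem_singleton_iff, SetLike.mem_coe,
    exists_eq_left]

variable [Group T]

/-- Subgroups `H t`, indexed by a complement `s : T →* G` of a normal subgroup `N`, which behave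
like the hyperplanes of a vector space `N`: each has order `c`, distinct ones span `N` and meet in
a subgroup of order `m`, and every nontrivial element of `N` lies on exactly `k` of them. -/
structure IsHyperplaneFamily (N : Subgroup G) (s : T →* G) (H : T → Subgroup G) (c m k : ℕ) :
    Prop where
  normal : N.Normal
  bijective : Function.Bijective fun p : N × T ↦ (p.1 : G) * s p.2
  lt : ∀ t, H t < N
  card : ∀ t, Nat.card (H t) = c
  mul_eq : Pairwise fun t u ↦ (H t : Set G) * (H u : Set G) = N
  card_inf : Pairwise fun t u ↦ Nat.card ↥(H t ⊓ H u) = m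
  card_mem : ∀ g ∈ N, g ≠ 1 → Nat.card {t // g ∈ H t} = k

/-- Elements of `ℤ[G]` which, for `H` and `s` coming from an inverse-closed ordering of the
hyperplanes, span the same lattice as `underline {1}, underline X1, …, underline X4`, but whose
products are easier to compute. -/
def sringGenerators [Fintype G] (N : Subgroup G) (s : T → G) (H : T → Subgroup G) :
    Set (MonoidAlgebra ℤ G) :=
  {1, underline (H 1 : Set G), underline (N : Set G), underline (twistedUnion s H),
    underline Set.univ}

section Cosets

variable {N : Subgroup G} {s : T →* G} {H : T → Subgroup G}

lemma mul_mem_twistedUnion_iff (hs : Function.Bijective fun p : N × T ↦ (p.1 : G) * s p.2)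
    (hH : ∀ t, H t ≤ N) {n : G} (hn : n ∈ N) (t : T) :
    n * s t ∈ twistedUnion s H ↔ n ∈ H t := by
  refine ⟨fun h ↦ ?_, fun h ↦ mem_twistedUnion.2 ⟨t, n, h, rfl⟩⟩
  obtain ⟨u, h, hh, heq⟩ := mem_twistedUnion.1 h
  have hpair : ((⟨h, hH u hh⟩, u) : N × T) = (⟨n, hn⟩, t) := hs.injective heq
  simp only [Prod.mk.injEq, Subtype.mk.injEq] at hpair
  obtain ⟨rfl, rfl⟩ := hpair
  exact hh

lemma mul_mem_normal_iff (hs : Function.Bijective fun p : N × T ↦ (p.1 : G) * s p.2)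
    {n : G} (hn : n ∈ N) (t : T) : n * s t ∈ N ↔ t = 1 := by
  refine ⟨fun h ↦ ?_, fun h ↦ by simpa [h] using hn⟩
  have hpair : ((⟨n, hn⟩, t) : N × T) = (⟨n * s t, h⟩, 1) := hs.injective (by simp)
  exact (Prod.mk.inj hpair).2

lemma exists_mul_eq (hs : Function.Bijective fun p : N × T ↦ (p.1 : G) * s p.2) (g : G) :
    ∃ n ∈ N, ∃ t, n * s t = g :=
  let ⟨⟨n, t⟩, h⟩ := hs.surjective g
  ⟨n, n.2, t, h⟩

lemma twistedUnion_const (hs : Function.Bijective fun p : N × T ↦ (p.1 : G) * s p.2) :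
    twistedUnion s (fun _ ↦ N) = Set.univ :=
  Set.eq_univ_of_forall fun g ↦
    let ⟨n, hn, t, h⟩ := exists_mul_eq hs g
    mem_twistedUnion.2 ⟨t, n, hn, h⟩

lemma underline_twistedUnion [Fintype G] [Fintype T]
    (hs : Function.Bijective fun p : N × T ↦ (p.1 : G) * s p.2) (hH : ∀ t, H t ≤ N) :
    underline (twistedUnion s H) = ∑ t, underline (H t : Set G) * of ℤ G (s t) := by
  simp only [underline_mul_of]
  refine underline_iUnion fun t u htu ↦ Set.disjoint_left.2 ?_
  rintro _ ⟨a, ha, _, rfl, rfl⟩ ⟨b, hb, _, rfl, heq⟩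
  have hpair : ((⟨b, hH u hb⟩, u) : N × T) = (⟨a, hH t ha⟩, t) := hs.injective heq
  exact htu (Prod.mk.inj hpair).2.symm

lemma inv_conj_mem_of_inv_twistedUnion_eq [N.Normal]
    (hs : Function.Bijective fun p : N × T ↦ (p.1 : G) * s p.2) (hH : ∀ t, H t ≤ N)
    (hinv : (twistedUnion s H)⁻¹ = twistedUnion s H) {t : T} {g : G} (hg : g ∈ H t) :
    (s t)⁻¹ * g * s t ∈ H t⁻¹ := by
  have hconj : (s t)⁻¹ * g⁻¹ * s t ∈ N := by
    simpa using Subgroup.Normal.conj_mem ‹N.Normal› _ (inv_mem (hH t hg)) (s t)⁻¹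
  have hmem : (g * s t)⁻¹ ∈ twistedUnion s H := by
    rw [← Set.mem_inv, hinv]
    exact mem_twistedUnion.2 ⟨t, g, hg, rfl⟩
  have : (s t)⁻¹ * g⁻¹ * s t * s t⁻¹ ∈ twistedUnion s H := by simpa [mul_assoc] using hmem
  simpa [mul_assoc] using inv_mem ((mul_mem_twistedUnion_iff hs hH hconj t⁻¹).1 this)

lemma mul_singleton_eq_singleton_mul_of_inv_twistedUnion_eq [N.Normal]
    (hs : Function.Bijective fun p : N × T ↦ (p.1 : G) * s p.2) (hH : ∀ t, H t ≤ N)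
    (hinv : (twistedUnion s H)⁻¹ = twistedUnion s H) (t : T) :
    (H t : Set G) * {s t} = {s t} * (H t⁻¹ : Set G) := by
  ext g
  simp only [Set.mul_singleton, Set.singleton_mul, Set.mem_image, SetLike.mem_coe]
  constructor
  · rintro ⟨h, hh, rfl⟩
    exact ⟨_, inv_conj_mem_of_inv_twistedUnion_eq hs hH hinv hh, by simp [mul_assoc]⟩
  · rintro ⟨h, hh, rfl⟩
    exact ⟨_, by simpa using inv_conj_mem_of_inv_twistedUnion_eq hs hH hinv hh, by simp⟩

lemma underline_twistedUnion_of_inv_eq [Fintype G] [Fintype T] [N.Normal]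
    (hs : Function.Bijective fun p : N × T ↦ (p.1 : G) * s p.2) (hH : ∀ t, H t ≤ N)
    (hinv : (twistedUnion s H)⁻¹ = twistedUnion s H) :
    underline (twistedUnion s H) = ∑ t, of ℤ G (s t)⁻¹ * underline (H t : Set G) := by
  rw [underline_twistedUnion hs hH, ← Equiv.sum_comp (Equiv.inv T)]
  refine Finset.sum_congr rfl fun t _ ↦ ?_
  rw [underline_mul_of, of_mul_underline, Equiv.inv_apply,
    mul_singleton_eq_singleton_mul_of_inv_twistedUnion_eq hs hH hinv, inv_inv, map_inv]

lemma stabilizer_le_of_normal [N.Normal] {X : Set G} (hX : Disjoint X N)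
    (hmul : ∀ g ∉ N, ∃ n ∈ N, n * g ∈ X) : MulAction.stabilizer G X ≤ N := by
  intro g hg
  by_contra hgN
  obtain ⟨n, hn, hnX⟩ := hmul g⁻¹ (by simpa using hgN)
  have hX' : g * (n * g⁻¹) ∈ X := MulAction.mem_stabilizer_iff.1 hg ▸ Set.smul_mem_smul_set hnX
  have hN : g * n * g⁻¹ ∈ N := Subgroup.Normal.conj_mem ‹N.Normal› n hn g
  exact Set.disjoint_left.1 hX hX' (by simpa [mul_assoc] using hN)

end Cosets

namespace IsHyperplaneFamily

variable {N : Subgroup G} {s : T →* G} {H : T → Subgroup G} {c m k : ℕ}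

lemma le (hH : IsHyperplaneFamily N s H c m k) (t : T) : H t ≤ N := (hH.lt t).le

lemma finite_index [Finite G] (hH : IsHyperplaneFamily N s H c m k) : Finite T :=
  have : Finite (N × T) := .of_injective _ hH.bijective.injective
  .prod_right N

section Products

variable [Fintype G]

lemma underline_mul_underline (hH : IsHyperplaneFamily N s H c m k) (t u : T) :
    underline (H t : Set G) * underline (H u : Set G) = m • underline (N : Set G) +
      if t = u then c • underline (H t : Set G) - m • underline (N : Set G) else 0 := by
  split_ifs with htu
  · subst htu
    rw [underline_subgroup_mul_of_le le_rfl, hH.card, add_sub_cancel]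
  · rw [underline_subgroup_mul_underline, hH.mul_eq htu, hH.card_inf htu, add_zero]

lemma underline_mul_normal (hH : IsHyperplaneFamily N s H c m k) (t : T) :
    underline (H t : Set G) * underline (N : Set G) = c • underline (N : Set G) := by
  rw [underline_subgroup_mul_of_le (hH.le t), hH.card]

lemma normal_mul_underline (hH : IsHyperplaneFamily N s H c m k) (t : T) :
    underline (N : Set G) * underline (H t : Set G) = c • underline (N : Set G) := by
  rw [underline_subgroup_mul_of_ge (hH.le t), hH.card]

lemma sum_underline [Fintype T] (hH : IsHyperplaneFamily N s H c m k) :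
    ∑ t, underline (H t : Set G) = (k : ℤ) • underline (N : Set G) +
      ((Fintype.card T : ℤ) - k) • 1 := by
  rw [← underline_one]
  ext g
  have hcoeff : (∑ t, underline (H t : Set G)).coeff g = Nat.card {t // g ∈ H t} := by
    simp [underline_coeff, Fintype.card_subtype]
  simp only [hcoeff, coeff_add, coeff_smul, Finsupp.add_apply, Finsupp.smul_apply,
    underline_coeff, SetLike.mem_coe, Set.mem_singleton_iff]
  by_cases h1 : g = 1
  · simp [h1, one_mem]
  by_cases hN : g ∈ N
  · simp only [h1, hN, hH.card_mem g hN h1, if_true, if_false, smul_eq_mul, mul_one, mul_zero,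
      add_zero]
  · have : IsEmpty {t // g ∈ H t} := ⟨fun t ↦ hN (hH.le t t.2)⟩
    simp [h1, hN]

lemma underline_univ_eq_sum_mul_of [Fintype T] (hH : IsHyperplaneFamily N s H c m k) :
    underline (Set.univ : Set G) = ∑ t, underline (N : Set G) * of ℤ G (s t) := by
  rw [← twistedUnion_const hH.bijective, underline_twistedUnion hH.bijective fun _ ↦ le_rfl]

lemma underline_univ_eq_sum_of_mul [Fintype T] (hH : IsHyperplaneFamily N s H c m k) :
    underline (Set.univ : Set G) = ∑ t, of ℤ G (s t)⁻¹ * underline (N : Set G) := by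
  have := hH.normal
  have huniv := twistedUnion_const hH.bijective
  rw [← huniv, underline_twistedUnion_of_inv_eq hH.bijective (fun _ ↦ le_rfl) (by
    rw [huniv, Set.inv_univ])]

lemma underline_mul_twistedUnion (hH : IsHyperplaneFamily N s H c m k) (t : T) :
    underline (H t : Set G) * underline (twistedUnion s H) = m • underline (Set.univ : Set G) +
      (c • underline (H t : Set G) - m • underline (N : Set G)) * of ℤ G (s t) := by
  have := hH.finite_index
  have := Fintype.ofFinite T
  rw [underline_twistedUnion hH.bijective hH.le, hH.underline_univ_eq_sum_mul_of, Finset.mul_sum]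
  simp only [← mul_assoc, hH.underline_mul_underline, add_mul, ite_mul, zero_mul,
    Finset.sum_add_distrib, Finset.sum_ite_eq, Finset.mem_univ, if_true, Finset.smul_sum,
    smul_mul_assoc]

lemma twistedUnion_mul_underline (hH : IsHyperplaneFamily N s H c m k)
    (hinv : (twistedUnion s H)⁻¹ = twistedUnion s H) (t : T) :
    underline (twistedUnion s H) * underline (H t : Set G) = m • underline (Set.univ : Set G) +
      of ℤ G (s t)⁻¹ * (c • underline (H t : Set G) - m • underline (N : Set G)) := by
  have := hH.finite_index
  have := Fintype.ofFinite T
  have := hH.normal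
  rw [underline_twistedUnion_of_inv_eq hH.bijective hH.le hinv, hH.underline_univ_eq_sum_of_mul,
    Finset.sum_mul]
  simp only [mul_assoc, hH.underline_mul_underline, mul_add, mul_ite, mul_zero,
    Finset.sum_add_distrib, Finset.sum_ite_eq', Finset.mem_univ, if_true, Finset.smul_sum,
    mul_smul_comm]

lemma normal_mul_twistedUnion (hH : IsHyperplaneFamily N s H c m k) :
    underline (N : Set G) * underline (twistedUnion s H) = c • underline (Set.univ : Set G) := by
  have := hH.finite_index
  have := Fintype.ofFinite T
  rw [underline_twistedUnion hH.bijective hH.le, hH.underline_univ_eq_sum_mul_of, Finset.mul_sum,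
    Finset.smul_sum]
  simp only [← mul_assoc, hH.normal_mul_underline, smul_mul_assoc]

lemma twistedUnion_mul_normal (hH : IsHyperplaneFamily N s H c m k)
    (hinv : (twistedUnion s H)⁻¹ = twistedUnion s H) :
    underline (twistedUnion s H) * underline (N : Set G) = c • underline (Set.univ : Set G) := by
  have := hH.finite_index
  have := Fintype.ofFinite T
  have := hH.normal
  rw [underline_twistedUnion_of_inv_eq hH.bijective hH.le hinv, hH.underline_univ_eq_sum_of_mul,
    Finset.sum_mul, Finset.smul_sum]
  simp only [mul_assoc, hH.underline_mul_normal, mul_smul_comm]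

lemma twistedUnion_mul_self [Fintype T] (hH : IsHyperplaneFamily N s H c m k)
    (hinv : (twistedUnion s H)⁻¹ = twistedUnion s H) :
    underline (twistedUnion s H) * underline (twistedUnion s H) =
      Fintype.card T • (m • underline (Set.univ : Set G) - m • underline (N : Set G)) +
        c • ((k : ℤ) • underline (N : Set G) +
          ((Fintype.card T : ℤ) - k) • 1) := by
  have := hH.normal
  have huniv (t : T) : of ℤ G (s t)⁻¹ * underline (Set.univ : Set G) = underline Set.univ := by
    rw [← underline_singleton, underline_mul_underline_univ, Set.ncard_singleton, one_smul]
  have hterm (t : T) : of ℤ G (s t)⁻¹ * underline (H t : Set G) * underline (twistedUnion s H) =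
      m • underline Set.univ - m • underline (N : Set G) + c • underline (H t⁻¹ : Set G) := by
    rw [mul_assoc, hH.underline_mul_twistedUnion, mul_add, ← mul_assoc, mul_smul_comm, huniv,
      mul_sub, mul_smul_comm, mul_smul_comm, sub_mul, smul_mul_assoc, smul_mul_assoc,
      of_inv_mul_underline_mul_of
        (mul_singleton_eq_singleton_mul_of_inv_twistedUnion_eq hH.bijective hH.le hinv t),
      of_inv_mul_underline_mul_of (Subgroup.set_mul_normal_comm _ N).symm]
    abel
  have hsum : ∑ t, underline (H t⁻¹ : Set G) = ∑ t, underline (H t : Set G) :=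
    Equiv.sum_comp (Equiv.inv T) fun t ↦ underline (H t : Set G)
  nth_rewrite 1 [underline_twistedUnion_of_inv_eq hH.bijective hH.le hinv]
  rw [Finset.sum_mul, Finset.sum_congr rfl fun t _ ↦ hterm t, Finset.sum_add_distrib,
    Finset.sum_const, Finset.card_univ, ← Finset.smul_sum, hsum, hH.sum_underline]

lemma mul_mem_span_sringGenerators (hH : IsHyperplaneFamily N s H c m k)
    (hinv : (twistedUnion s H)⁻¹ = twistedUnion s H) :
    ∀ x ∈ sringGenerators N s H, ∀ y ∈ sringGenerators N s H,
      x * y ∈ Submodule.span ℤ (sringGenerators N s H) := by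
  have := hH.finite_index
  have := Fintype.ofFinite T
  have hmem : ∀ x ∈ sringGenerators N s H, x ∈ Submodule.span ℤ (sringGenerators N s H) :=
    fun _ hx ↦ Submodule.subset_span hx
  generalize Submodule.span ℤ (sringGenerators N s H) = P at hmem ⊢
  simp only [sringGenerators, Set.mem_insert_iff, Set.mem_singleton_iff, forall_eq_or_imp,
    forall_eq] at hmem ⊢
  obtain ⟨hone, hH1, hN, hD, huniv⟩ := hmem
  have hHH := hH.underline_mul_underline 1 1
  have hNN := underline_subgroup_mul_of_le (le_refl N)
  have hHD := hH.underline_mul_twistedUnion 1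
  have hDH := hH.twistedUnion_mul_underline hinv 1
  simp only [map_one, inv_one, mul_one, one_mul, if_true, add_sub_cancel] at hHH hHD hDH
  simp only [underline_univ_mul_underline, underline_mul_underline_univ, hHH, hNN, hHD, hDH,
    hH.underline_mul_normal, hH.normal_mul_underline, hH.normal_mul_twistedUnion,
    hH.twistedUnion_mul_normal hinv, hH.twistedUnion_mul_self hinv, one_mul, mul_one]
  have hHD_mem := add_mem (nsmul_mem huniv m) (sub_mem (nsmul_mem hH1 c) (nsmul_mem hN m))
  have hDD_mem := add_mem
    (nsmul_mem (sub_mem (nsmul_mem huniv m) (nsmul_mem hN m)) (Fintype.card T))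
    (nsmul_mem (add_mem (zsmul_mem hN k) (zsmul_mem hone ((Fintype.card T : ℤ) - k))) c)
  simp only [hone, hH1, hN, hD, huniv, hHD_mem, hDD_mem, nsmul_mem, and_self]

end Products

lemma mul_mem_twistedUnion_sdiff_iff (hH : IsHyperplaneFamily N s H c m k) {n : G} (hn : n ∈ N)
    (t : T) : n * s t ∈ twistedUnion s H \ H 1 ↔ t ≠ 1 ∧ n ∈ H t := by
  rw [Set.mem_sdiff, mul_mem_twistedUnion_iff hH.bijective hH.le hn, SetLike.mem_coe]
  by_cases ht : t = 1
  · simp [ht]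
  · have h1 : n * s t ∉ H 1 := fun h ↦ ht ((mul_mem_normal_iff hH.bijective hn t).1 (hH.le 1 h))
    simp only [h1, ht, not_false_eq_true, and_true, ne_eq, true_and]

lemma mul_mem_compl_sdiff_iff (hH : IsHyperplaneFamily N s H c m k) {n : G} (hn : n ∈ N) (t : T) :
    n * s t ∈ (Set.univ \ N : Set G) \ (twistedUnion s H \ H 1) ↔ t ≠ 1 ∧ n ∉ H t := by
  rw [Set.mem_sdiff, hH.mul_mem_twistedUnion_sdiff_iff hn, Set.mem_sdiff, SetLike.mem_coe,
    mul_mem_normal_iff hH.bijective hn]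
  simp only [Set.mem_univ, true_and, not_and, ne_eq]
  exact and_congr_right fun ht ↦ imp_iff_right ht

lemma disjoint_twistedUnion_sdiff (hH : IsHyperplaneFamily N s H c m k) :
    Disjoint (twistedUnion s H \ H 1) N := by
  refine Set.disjoint_left.2 fun g hg hN ↦ ?_
  have hg1 : g * s 1 ∈ twistedUnion s H \ H 1 := by simpa using hg
  exact ((hH.mul_mem_twistedUnion_sdiff_iff hN 1).1 hg1).1 rfl

lemma span_underline_eq_span_sringGenerators [Fintype G]
    (hH : IsHyperplaneFamily N s H c m k) :
    Submodule.span ℤ {underline {(1 : G)}, underline ((H 1 : Set G) \ {1}),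
      underline ((N : Set G) \ H 1), underline (twistedUnion s H \ H 1),
      underline ((Set.univ \ N : Set G) \ (twistedUnion s H \ H 1))} =
    Submodule.span ℤ (sringGenerators N s H) := by
  have h1D : (H 1 : Set G) ⊆ twistedUnion s H := fun h hh ↦
    mem_twistedUnion.2 ⟨1, h, hh, by simp⟩
  have hDN : twistedUnion s H \ H 1 ⊆ Set.univ \ (N : Set G) := fun g hg ↦
    ⟨trivial, Set.disjoint_left.1 hH.disjoint_twistedUnion_sdiff hg⟩
  rw [underline_sdiff (Set.singleton_subset_iff.2 (one_mem (H 1))), underline_sdiff (hH.le 1),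
    underline_sdiff hDN, underline_sdiff h1D, underline_sdiff (Set.subset_univ _), underline_one]
  exact span_differences_eq_span _ _ _ _ _

lemma stabilizer_twistedUnion_sdiff (hH : IsHyperplaneFamily N s H c m k)
    (hbot : ∀ g ∈ N, (∀ t ≠ 1, g ∈ H t) → g = 1) :
    MulAction.stabilizer G (twistedUnion s H \ H 1) = ⊥ := by
  have := hH.normal
  have hmem (t : T) (ht : t ≠ 1) : s t ∈ twistedUnion s H \ H 1 := by
    simpa using (hH.mul_mem_twistedUnion_sdiff_iff N.one_mem t).2 ⟨ht, one_mem _⟩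
  have hle : MulAction.stabilizer G (twistedUnion s H \ H 1) ≤ N := by
    refine stabilizer_le_of_normal hH.disjoint_twistedUnion_sdiff fun g hg ↦ ?_
    obtain ⟨n, hn, t, rfl⟩ := exists_mul_eq hH.bijective g
    have ht : t ≠ 1 := mt (mul_mem_normal_iff hH.bijective hn t).2 hg
    exact ⟨n⁻¹, inv_mem hn, by simpa using hmem t ht⟩
  refine (Subgroup.eq_bot_iff_forall _).2 fun g hg ↦ hbot g (hle hg) fun t ht ↦ ?_
  have hgst : g * s t ∈ twistedUnion s H \ H 1 :=
    MulAction.mem_stabilizer_iff.1 hg ▸ Set.smul_mem_smul_set (hmem t ht)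
  exact ((hH.mul_mem_twistedUnion_sdiff_iff (hle hg) t).1 hgst).2

lemma stabilizer_compl_sdiff (hH : IsHyperplaneFamily N s H c m k)
    (hbot : ∀ g ∈ N, (∀ t ≠ 1, g ∈ H t) → g = 1) :
    MulAction.stabilizer G ((Set.univ \ N : Set G) \ (twistedUnion s H \ H 1)) = ⊥ := by
  have := hH.normal
  set X := (Set.univ \ N : Set G) \ (twistedUnion s H \ H 1)
  have hle : MulAction.stabilizer G X ≤ N := by
    refine stabilizer_le_of_normal (Set.disjoint_left.2 fun g hg ↦ hg.1.2) fun g hg ↦ ?_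
    obtain ⟨n, hn, t, rfl⟩ := exists_mul_eq hH.bijective g
    have ht : t ≠ 1 := mt (mul_mem_normal_iff hH.bijective hn t).2 hg
    obtain ⟨a, haN, haH⟩ := SetLike.exists_of_lt (hH.lt t)
    refine ⟨a * n⁻¹, mul_mem haN (inv_mem hn), ?_⟩
    rw [mul_assoc, inv_mul_cancel_left]
    exact (hH.mul_mem_compl_sdiff_iff haN t).2 ⟨ht, haH⟩
  refine (Subgroup.eq_bot_iff_forall _).2 fun g hg ↦ hbot g (hle hg) fun t ht ↦ ?_
  by_contra hgt
  have hinv : g⁻¹ * s t ∈ X :=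
    (hH.mul_mem_compl_sdiff_iff (inv_mem (hle hg)) t).2 ⟨ht, by simpa using hgt⟩
  have hst : g * (g⁻¹ * s t) ∈ X :=
    MulAction.mem_stabilizer_iff.1 hg ▸ Set.smul_mem_smul_set hinv
  rw [mul_inv_cancel_left, ← one_mul (s t)] at hst
  exact ((hH.mul_mem_compl_sdiff_iff N.one_mem t).1 hst).2 (one_mem _)

end IsHyperplaneFamily

end HyperplaneFamily

section Hyperplanes

open Module

variable {K V : Type*} [DivisionRing K] [AddCommGroup V] [Module K V]

lemma exists_linearEquiv_apply_eq {x y : V} (hx : x ≠ 0) (hy : y ≠ 0) :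
    ∃ e : V ≃ₗ[K] V, e x = y := by
  let ex := LinearEquiv.toSpanNonzeroSingleton K V x hx
  let ey := LinearEquiv.toSpanNonzeroSingleton K V y hy
  obtain ⟨e, he⟩ := Submodule.exists_linearEquiv_restrict_eq (ex.symm.trans ey)
  have hex := he (ex 1)
  rw [LinearEquiv.trans_apply, LinearEquiv.symm_apply_apply] at hex
  exact ⟨e, by simpa [ex, ey] using hex.symm⟩

variable (K V) in
lemma exists_natCard_isCoatom_mem_eq :
    ∃ k, ∀ x : V, x ≠ 0 → Nat.card {W : Submodule K V // IsCoatom W ∧ x ∈ W} = k := by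
  rcases subsingleton_or_nontrivial V with _ | _
  · exact ⟨0, fun x hx ↦ absurd (Subsingleton.elim x 0) hx⟩
  obtain ⟨y, hy⟩ := exists_ne (0 : V)
  refine ⟨Nat.card {W : Submodule K V // IsCoatom W ∧ y ∈ W}, fun x hx ↦ ?_⟩
  obtain ⟨e, rfl⟩ := exists_linearEquiv_apply_eq (K := K) hx hy
  refine Nat.card_congr ((Submodule.orderIsoMapComap e).toEquiv.subtypeEquiv fun W ↦ ?_)
  have hmem : e x ∈ Submodule.orderIsoMapComap e W ↔ x ∈ W := by
    rw [Submodule.orderIsoMapComap_apply, Submodule.mem_map_equiv, e.symm_apply_apply]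
  exact ((Submodule.orderIsoMapComap e).isCoatom_iff W).symm.and hmem.symm

lemma exists_isCoatom_notMem_notMem {x y : V} (hx : x ≠ 0) (hy : y ≠ 0) :
    ∃ W : Submodule K V, IsCoatom W ∧ x ∉ W ∧ y ∉ W := by
  suffices ∃ f : V →ₗ[K] K, f x ≠ 0 ∧ f y ≠ 0 by
    obtain ⟨f, hfx, hfy⟩ := this
    exact ⟨LinearMap.ker f, LinearMap.isCoatom_ker_of_surjective
      (LinearMap.surjective (by rintro rfl; exact hfx rfl)), hfx, hfy⟩
  obtain ⟨f, hf⟩ := not_forall.1 (mt (forall_dual_apply_eq_zero_iff K x).1 hx)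
  obtain ⟨g, hg⟩ := not_forall.1 (mt (forall_dual_apply_eq_zero_iff K y).1 hy)
  by_cases hfy : f y = 0
  · by_cases hgx : g x = 0
    · exact ⟨f + g, by simpa [hgx] using hf, by simpa [hfy] using hg⟩
    · exact ⟨g, hgx, hg⟩
  · exact ⟨f, hf, hfy⟩

lemma eq_zero_of_forall_isCoatom_ne_mem {W : Submodule K V} (hW : W ≠ ⊥) {x : V}
    (hx : ∀ W', IsCoatom W' → W' ≠ W → x ∈ W') : x = 0 := by
  by_contra hx0
  obtain ⟨y, hyW, hy0⟩ := W.exists_mem_ne_zero_of_ne_bot hW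
  obtain ⟨W', hW', hxW', hyW'⟩ := exists_isCoatom_notMem_notMem (K := K) hx0 hy0
  exact hxW' (hx W' hW' (by rintro rfl; exact hyW' hyW))

variable [FiniteDimensional K V] {W W' : Submodule K V}

lemma isCoatom_iff_finrank_add_one : IsCoatom W ↔ finrank K W + 1 = finrank K V := by
  rw [← isSimpleModule_iff_isCoatom, isSimpleModule_iff_finrank_eq_one,
    ← W.finrank_quotient_add_finrank]
  omega

lemma setOf_isCoatom_eq (hV : 0 < finrank K V) :
    {W : Submodule K V | IsCoatom W} = {W : Submodule K V | finrank K W = finrank K V - 1} :=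
  Set.ext fun W ↦ isCoatom_iff_finrank_add_one.trans
    (show finrank K W + 1 = finrank K V ↔ finrank K W = finrank K V - 1 by omega)

lemma natCard_of_isCoatom (hW : IsCoatom W) : Nat.card W = Nat.card K ^ (finrank K V - 1) := by
  rw [natCard_eq_pow_finrank (K := K), ← isCoatom_iff_finrank_add_one.1 hW, Nat.add_sub_cancel]

lemma natCard_inf_of_isCoatom (hW : IsCoatom W) (hW' : IsCoatom W') (hne : W ≠ W') :
    Nat.card ↥(W ⊓ W') = Nat.card K ^ (finrank K V - 2) := by
  have hsup := Submodule.finrank_sup_add_finrank_inf_eq W W'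
  rw [hW.sup_eq_top_of_ne hW' hne, finrank_top] at hsup
  have h := isCoatom_iff_finrank_add_one.1 hW
  have h' := isCoatom_iff_finrank_add_one.1 hW'
  rw [natCard_eq_pow_finrank (K := K)]
  congr 1
  omega

lemma ne_bot_of_isCoatom (hV : 2 ≤ finrank K V) (hW : IsCoatom W) : W ≠ ⊥ := by
  rintro rfl
  have := isCoatom_iff_finrank_add_one.1 hW
  rw [finrank_bot] at this
  omega

end Hyperplanes

section Embedding

open Module Multiplicative
open scoped Pointwise

variable {K V G T : Type*} [DivisionRing K] [AddCommGroup V] [Module K V] [Group G] [Group T]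
  {ι : Multiplicative V →* G} {s : T →* G} {A : T → Submodule K V}

/-- The image of a subspace of `V` under an embedding of the additive group of `V` into `G`. -/
def submoduleImage (ι : Multiplicative V →* G) (W : Submodule K V) : Subgroup G :=
  W.toAddSubgroup.toSubgroup.map ι

lemma mem_submoduleImage (hι : Function.Injective ι) {W : Submodule K V} {v : V} :
    ι (ofAdd v) ∈ submoduleImage ι W ↔ v ∈ W :=
  Subgroup.mem_map_iff_mem hι

lemma natCard_submoduleImage (hι : Function.Injective ι) (W : Submodule K V) :
    Nat.card (submoduleImage ι W) = Nat.card W :=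
  Subgroup.card_map_of_injective hι

lemma submoduleImage_inf (hι : Function.Injective ι) (W W' : Submodule K V) :
    submoduleImage ι (W ⊓ W') = submoduleImage ι W ⊓ submoduleImage ι W' :=
  Subgroup.map_inf W.toAddSubgroup.toSubgroup W'.toAddSubgroup.toSubgroup ι hι

lemma submoduleImage_le_range (W : Submodule K V) : submoduleImage ι W ≤ ι.range :=
  Subgroup.map_le_range ι _

lemma submoduleImage_lt_range (hι : Function.Injective ι) {W : Submodule K V} (hW : W < ⊤) :
    submoduleImage ι W < ι.range := by
  obtain ⟨v, -, hv⟩ := SetLike.exists_of_lt hW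
  exact SetLike.lt_iff_le_and_exists.2
    ⟨submoduleImage_le_range W, ι (ofAdd v), ⟨_, rfl⟩, mt (mem_submoduleImage hι).1 hv⟩

lemma submoduleImage_mul_submoduleImage {W W' : Submodule K V} (h : W ⊔ W' = ⊤) :
    (submoduleImage ι W : Set G) * (submoduleImage ι W' : Set G) = ι.range := by
  refine Set.Subset.antisymm ?_ ?_
  · rintro _ ⟨_, ⟨a, -, rfl⟩, _, ⟨b, -, rfl⟩, rfl⟩
    exact ⟨a * b, map_mul ι a b⟩
  · rintro _ ⟨v, rfl⟩
    obtain ⟨a, ha, b, hb, hab⟩ := Submodule.mem_sup.1 (h ▸ Submodule.mem_top : v.toAdd ∈ W ⊔ W')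
    refine ⟨_, ⟨ofAdd a, ha, rfl⟩, _, ⟨ofAdd b, hb, rfl⟩, ?_⟩
    change ι (ofAdd a) * ι (ofAdd b) = ι v
    rw [← map_mul, ← ofAdd_add, hab, ofAdd_toAdd]

lemma mul_eq_mul_iff_of_bijective
    (hbij : Function.Bijective fun p : V × T ↦ ι (ofAdd p.1) * s p.2) {v w : V} {t u : T} :
    ι (ofAdd v) * s t = ι (ofAdd w) * s u ↔ v = w ∧ t = u :=
  (hbij.injective.eq_iff (a := (v, t)) (b := (w, u))).trans Prod.mk_inj

lemma injective_of_bijective_mul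
    (hbij : Function.Bijective fun p : V × T ↦ ι (ofAdd p.1) * s p.2) : Function.Injective ι :=
  fun _ _ h ↦
    ((mul_eq_mul_iff_of_bijective hbij).1 (congrArg (· * s 1) h)).1

lemma bijective_range_mul
    (hbij : Function.Bijective fun p : V × T ↦ ι (ofAdd p.1) * s p.2) :
    Function.Bijective fun p : ι.range × T ↦ (p.1 : G) * s p.2 := by
  refine ⟨?_, fun g ↦ ?_⟩
  · rintro ⟨⟨_, v, rfl⟩, t⟩ ⟨⟨_, w, rfl⟩, u⟩ h
    obtain ⟨rfl, rfl⟩ : v = w ∧ t = u := (mul_eq_mul_iff_of_bijective hbij).1 h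
    rfl
  · obtain ⟨⟨v, t⟩, rfl⟩ := hbij.surjective g
    exact ⟨(⟨ι (ofAdd v), _, rfl⟩, t), rfl⟩

lemma exists_isHyperplaneFamily [ι.range.Normal] [FiniteDimensional K V]
    (hbij : Function.Bijective fun p : V × T ↦ ι (ofAdd p.1) * s p.2)
    (hAinj : Function.Injective A) (hA : Set.range A = {W | IsCoatom W}) :
    ∃ k, IsHyperplaneFamily ι.range s (fun t ↦ submoduleImage ι (A t))
      (Nat.card K ^ (finrank K V - 1)) (Nat.card K ^ (finrank K V - 2)) k := by
  have hι := injective_of_bijective_mul hbij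
  have hcoatom (t : T) : IsCoatom (A t) := hA.subset ⟨t, rfl⟩
  obtain ⟨k, hk⟩ := exists_natCard_isCoatom_mem_eq K V
  refine ⟨k, ‹_›, bijective_range_mul hbij,
    fun t ↦ submoduleImage_lt_range hι (hcoatom t).lt_top,
    fun t ↦ ?_, fun t u htu ↦ ?_, fun t u htu ↦ ?_, ?_⟩
  · rw [natCard_submoduleImage hι, natCard_of_isCoatom (hcoatom t)]
  · exact submoduleImage_mul_submoduleImage
      ((hcoatom t).sup_eq_top_of_ne (hcoatom u) (hAinj.ne htu))
  · change Nat.card ↥(submoduleImage ι (A t) ⊓ submoduleImage ι (A u)) = _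
    rw [← submoduleImage_inf hι, natCard_submoduleImage hι,
      natCard_inf_of_isCoatom (hcoatom t) (hcoatom u) (hAinj.ne htu)]
  · rintro _ ⟨v, rfl⟩ hv
    rw [← hk v.toAdd fun h ↦ hv (by simp [toAdd_eq_zero.1 h])]
    refine Nat.card_congr (Equiv.ofBijective
      (fun t ↦ ⟨A t, hcoatom t, (mem_submoduleImage hι).1 t.2⟩) ⟨fun t u h ↦ ?_, ?_⟩)
    · exact Subtype.ext (hAinj (Subtype.ext_iff.1 h))
    · rintro ⟨W, hW, hvW⟩
      obtain ⟨t, rfl⟩ := hA.superset hW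
      exact ⟨⟨t, (mem_submoduleImage hι).2 hvW⟩, rfl⟩

lemma image_sdiff_zero_eq (hι : Function.Injective ι) (W : Submodule K V) :
    (fun v ↦ ι (ofAdd v)) '' ((W : Set V) \ {0}) = (submoduleImage ι W : Set G) \ {1} := by
  have hinj : Function.Injective fun v ↦ ι (ofAdd v) := hι.comp ofAdd.injective
  rw [Set.image_sdiff hinj, Set.image_singleton, ofAdd_zero, map_one]
  rfl

lemma image_univ_sdiff_eq (hι : Function.Injective ι) (W : Submodule K V) :
    (fun v ↦ ι (ofAdd v)) '' (Set.univ \ (W : Set V)) = (ι.range : Set G) \ submoduleImage ι W := by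
  have hinj : Function.Injective fun v ↦ ι (ofAdd v) := hι.comp ofAdd.injective
  rw [Set.image_sdiff hinj, Set.image_univ]
  rfl

lemma mul_mem_twistedUnion_submoduleImage_iff
    (hbij : Function.Bijective fun p : V × T ↦ ι (ofAdd p.1) * s p.2) {v : V} {t : T} :
    ι (ofAdd v) * s t ∈ twistedUnion s (fun t ↦ submoduleImage ι (A t)) ↔ v ∈ A t :=
  (mul_mem_twistedUnion_iff (bijective_range_mul hbij)
    (fun t ↦ submoduleImage_le_range (A t)) ⟨_, rfl⟩ t).trans
    (mem_submoduleImage (injective_of_bijective_mul hbij))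

lemma setOf_exists_notMem_eq
    (hbij : Function.Bijective fun p : V × T ↦ ι (ofAdd p.1) * s p.2) :
    {g | ∃ t, ∃ y ∈ (Set.univ : Set V) \ A t, g = ι (ofAdd y) * s t} =
      (twistedUnion s fun t ↦ submoduleImage ι (A t))ᶜ := by
  ext g
  obtain ⟨⟨v, t⟩, rfl⟩ := hbij.surjective g
  simp [mul_mem_twistedUnion_submoduleImage_iff hbij, mul_eq_mul_iff_of_bijective hbij]

lemma setOf_exists_ne_one_mem_eq {c m k : ℕ}
    (hbij : Function.Bijective fun p : V × T ↦ ι (ofAdd p.1) * s p.2)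
    (hfam : IsHyperplaneFamily ι.range s (fun t ↦ submoduleImage ι (A t)) c m k) :
    {g | ∃ t, t ≠ 1 ∧ ∃ y ∈ (A t : Set V), g = ι (ofAdd y) * s t} =
      twistedUnion s (fun t ↦ submoduleImage ι (A t)) \ submoduleImage ι (A 1) := by
  ext g
  obtain ⟨⟨v, t⟩, rfl⟩ := hbij.surjective g
  rw [hfam.mul_mem_twistedUnion_sdiff_iff ⟨_, rfl⟩,
    mem_submoduleImage (injective_of_bijective_mul hbij)]
  simp [mul_eq_mul_iff_of_bijective hbij]

lemma setOf_exists_ne_one_notMem_eq {c m k : ℕ}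
    (hbij : Function.Bijective fun p : V × T ↦ ι (ofAdd p.1) * s p.2)
    (hfam : IsHyperplaneFamily ι.range s (fun t ↦ submoduleImage ι (A t)) c m k) :
    {g | ∃ t, t ≠ 1 ∧ ∃ y ∈ (Set.univ : Set V) \ A t, g = ι (ofAdd y) * s t} =
      (Set.univ \ ι.range : Set G) \
        (twistedUnion s (fun t ↦ submoduleImage ι (A t)) \ submoduleImage ι (A 1)) := by
  ext g
  obtain ⟨⟨v, t⟩, rfl⟩ := hbij.surjective g
  rw [hfam.mul_mem_compl_sdiff_iff ⟨_, rfl⟩,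
    mem_submoduleImage (injective_of_bijective_mul hbij)]
  simp [mul_eq_mul_iff_of_bijective hbij]

lemma eq_one_of_forall_ne_one_mem_submoduleImage (hι : Function.Injective ι)
    (hV : 2 ≤ finrank K V) (hA : Set.range A = {W | IsCoatom W}) (g : G) (hrange : g ∈ ι.range)
    (hg : ∀ t ≠ 1, g ∈ submoduleImage ι (A t)) : g = 1 := by
  have : FiniteDimensional K V := .of_finrank_pos (by omega)
  obtain ⟨v, rfl⟩ := hrange
  have hbot : A 1 ≠ ⊥ := ne_bot_of_isCoatom hV (hA.subset ⟨1, rfl⟩)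
  have hv : v.toAdd = 0 := eq_zero_of_forall_isCoatom_ne_mem hbot fun W hW hne ↦ by
    obtain ⟨t, rfl⟩ := hA.superset hW
    exact (mem_submoduleImage hι).1 (hg t (by rintro rfl; exact hne rfl))
  rw [toAdd_eq_zero.1 hv, map_one]

end Embedding

section Cyclic

variable {G : Type*} [Group G] {t : G}

lemma normal_of_forall_conj_mem {N : Subgroup G} (hdecomp : ∀ g, ∃ n ∈ N, ∃ i : ℕ, g = n * t ^ i)
    (hconj : ∀ n ∈ N, t * n * t⁻¹ ∈ N) : N.Normal := by
  have hpow (i : ℕ) : ∀ n ∈ N, t ^ i * n * (t ^ i)⁻¹ ∈ N := by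
    induction i with
    | zero => simp
    | succ i ih =>
      intro n hn
      simpa [pow_succ', mul_assoc] using hconj _ (ih n hn)
  refine ⟨fun n hn g ↦ ?_⟩
  obtain ⟨a, ha, i, rfl⟩ := hdecomp g
  simpa [mul_assoc] using mul_mem (mul_mem ha (hpow i n hn)) (inv_mem ha)

lemma bijective_mul_zpowers {V : Type*} [Finite V] {f : V → G}
    (ht : IsOfFinOrder t)
    (hdecomp : ∀ g, ∃ v, ∃ i : ℕ, g = f v * t ^ i)
    (hcard : Nat.card G = Nat.card V * orderOf t) :
    Function.Bijective
      fun p : V × Subgroup.zpowers t ↦ f p.1 * (Subgroup.zpowers t).subtype p.2 := by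
  have hsurj : Function.Surjective
      fun p : V × Subgroup.zpowers t ↦ f p.1 * (Subgroup.zpowers t).subtype p.2 := fun g ↦ by
    obtain ⟨v, i, rfl⟩ := hdecomp g
    exact ⟨(v, ⟨t ^ i, Subgroup.npow_mem_zpowers t i⟩), rfl⟩
  have : Finite (Subgroup.zpowers t) := ht.finite_zpowers
  exact (Nat.bijective_iff_surjective_and_card _).2
    ⟨hsurj, by rw [Nat.card_prod, Nat.card_zpowers, hcard]⟩

lemma val_finEquivZPowers_symm_eq_zero_iff (ht : IsOfFinOrder t) {u : Subgroup.zpowers t} :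
    ((finEquivZPowers ht).symm u : ℕ) = 0 ↔ u = 1 := by
  refine ⟨fun h ↦ Subtype.ext ?_, ?_⟩
  · rw [← pow_finEquivZPowers_symm_apply ht u, h, pow_zero, OneMemClass.coe_one]
  · rintro rfl
    have h1 : (⟨t ^ 0, 0, by simp⟩ : Subgroup.zpowers t) = 1 := Subtype.ext (pow_zero t)
    rw [← h1, finEquivZPowers_symm_apply]
    exact Nat.zero_mod _

lemma exists_zpowers_iff (ht : IsOfFinOrder t) {P : Fin (orderOf t) → G → Prop} :
    (∃ u : Subgroup.zpowers t, P ((finEquivZPowers ht).symm u) u) ↔ ∃ i, P i (t ^ (i : ℕ)) :=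
  (finEquivZPowers ht).surjective.exists.trans <| exists_congr fun i ↦ by
    rw [Equiv.symm_apply_apply, finEquivZPowers_apply]

lemma setOf_exists_mul_pow_eq {V : Type*} (ht : IsOfFinOrder t) (f : V → G)
    (B : Fin (orderOf t) → Set V) :
    {g | ∃ i, ∃ y ∈ B i, g = f y * t ^ (i : ℕ)} =
      {g | ∃ u : Subgroup.zpowers t, ∃ y ∈ B ((finEquivZPowers ht).symm u), g = f y * u} :=
  Set.ext fun g ↦ (exists_zpowers_iff ht (P := fun i b ↦ ∃ y ∈ B i, g = f y * b)).symm

lemma setOf_exists_ne_zero_mul_pow_eq {V : Type*} (ht : IsOfFinOrder t) (f : V → G)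
    (B : Fin (orderOf t) → Set V) :
    {g | ∃ i : Fin (orderOf t), (i : ℕ) ≠ 0 ∧ ∃ y ∈ B i, g = f y * t ^ (i : ℕ)} =
      {g | ∃ u : Subgroup.zpowers t,
        u ≠ 1 ∧ ∃ y ∈ B ((finEquivZPowers ht).symm u), g = f y * u} := by
  simp only [ne_eq, ← val_finEquivZPowers_symm_eq_zero_iff ht]
  exact Set.ext fun g ↦
    (exists_zpowers_iff ht (P := fun i b ↦ (i : ℕ) ≠ 0 ∧ ∃ y ∈ B i, g = f y * b)).symm

end Cyclic

lemma inv_sdiff_eq_of_inv_eq {G : Type*} [InvolutiveInv G] {X Y : Set G} (hX : X⁻¹ = X)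
    (hY : Y⁻¹ = Y) : (X \ Y)⁻¹ = X \ Y :=
  congrArg₂ (· \ ·) hX hY

open Multiplicative in
theorem sring_of_hyperplane_ordering_general
    {K V G T : Type*} [DivisionRing K] [AddCommGroup V] [Module K V] [Group G] [Fintype G]
    [Group T] (hV : 2 ≤ Module.finrank K V) (ι : Multiplicative V →* G) [ι.range.Normal]
    (s : T →* G) (hbij : Function.Bijective fun p : V × T ↦ ι (ofAdd p.1) * s p.2)
    (A : T → Submodule K V) (hAinj : Function.Injective A) (hA : Set.range A = {W | IsCoatom W})
    (X1 X2 X3 X4 S : Set G)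
    (hX1 : X1 = (fun v ↦ ι (ofAdd v)) '' ((A 1 : Set V) \ {0}))
    (hX2 : X2 = (fun v ↦ ι (ofAdd v)) '' (Set.univ \ (A 1 : Set V)))
    (hX3 : X3 = {g | ∃ t, t ≠ 1 ∧ ∃ y ∈ (A t : Set V), g = ι (ofAdd y) * s t})
    (hX4 : X4 = {g | ∃ t, t ≠ 1 ∧ ∃ y ∈ Set.univ \ (A t : Set V), g = ι (ofAdd y) * s t})
    (hS : S = {g | ∃ t, ∃ y ∈ Set.univ \ (A t : Set V), g = ι (ofAdd y) * s t})
    (hSinv : S⁻¹ = S) :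
    ({(1 : G)} : Set G)⁻¹ = {(1 : G)} ∧ X1⁻¹ = X1 ∧ X2⁻¹ = X2 ∧ X3⁻¹ = X3 ∧ X4⁻¹ = X4 ∧
    (∀ a b : MonoidAlgebra ℤ G,
      a ∈ Submodule.span ℤ ({underline {(1 : G)}, underline X1, underline X2,
        underline X3, underline X4} : Set (MonoidAlgebra ℤ G)) →
      b ∈ Submodule.span ℤ ({underline {(1 : G)}, underline X1, underline X2,
        underline X3, underline X4} : Set (MonoidAlgebra ℤ G)) →
      a * b ∈ Submodule.span ℤ ({underline {(1 : G)}, underline X1, underline X2,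
        underline X3, underline X4} : Set (MonoidAlgebra ℤ G))) ∧
    {g : G | (fun x ↦ g * x) '' X3 = X3} = {(1 : G)} ∧
    {g : G | (fun x ↦ g * x) '' X4 = X4} = {(1 : G)} := by
  have hι := injective_of_bijective_mul hbij
  have : FiniteDimensional K V := .of_finrank_pos (by omega)
  obtain ⟨k, hfam⟩ := exists_isHyperplaneFamily hbij hAinj hA
  have hbot := eq_one_of_forall_ne_one_mem_submoduleImage hι hV hA
  rw [setOf_exists_notMem_eq hbij] at hS
  rw [image_sdiff_zero_eq hι] at hX1
  rw [image_univ_sdiff_eq hι] at hX2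
  rw [setOf_exists_ne_one_mem_eq hbij hfam] at hX3
  rw [setOf_exists_ne_one_notMem_eq hbij hfam] at hX4
  subst hX1 hX2 hX3 hX4 hS
  have hDinv := compl_injective ((Set.compl_inv).symm.trans hSinv)
  have hX3inv := inv_sdiff_eq_of_inv_eq hDinv (inv_coe_set (H := submoduleImage ι (A 1)))
  refine ⟨by simp, inv_sdiff_eq_of_inv_eq inv_coe_set (by simp),
    inv_sdiff_eq_of_inv_eq inv_coe_set inv_coe_set, hX3inv,
    inv_sdiff_eq_of_inv_eq (inv_sdiff_eq_of_inv_eq Set.inv_univ inv_coe_set) hX3inv, ?_,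
    congrArg SetLike.coe (hfam.stabilizer_twistedUnion_sdiff hbot),
    congrArg SetLike.coe (hfam.stabilizer_compl_sdiff hbot)⟩
  rw [hfam.span_underline_eq_span_sringGenerators]
  exact fun a b ↦ mul_mem_span_of_forall_mul_mem (hfam.mul_mem_span_sringGenerators hDinv)

/-- in the setup `G = F ⋊ ⟨τ⟩` (given axiomatically by `ι`, `t` below),
with `X1, X2, X3, X4, S` built from an ordering `A 0, …, A (l-1)` of the
`K`-hyperplanes of `F` such that `S` is inverse-closed, each of the sets
`{1}, X1, X2, X3, X4` is inverse-closed, the `ℤ`-span of their `underline`s in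
`MonoidAlgebra ℤ G` is closed under multiplication (an S-ring of rank 5), and the
left stabilizers of `X3` and of `X4` are trivial. -/
theorem sring_of_hyperplane_ordering
    (p e q r l : ℕ) (hp : p.Prime) (he : 1 ≤ e) (hq : q = p ^ e) (hr : 2 ≤ r)
    (hl : l = (q ^ r - 1) / (q - 1)) (hlpos : 0 < l)
    (K F : Type*) [Field K] [Field F] [Algebra K F] [Fintype K] [Fintype F]
    [DecidableEq F]
    (hcardK : Fintype.card K = q) (hcardF : Fintype.card F = q ^ r)
    (hrank : Module.finrank K F = r)
    (σ : Fˣ) (hσ : ∀ u : Fˣ, u ∈ Subgroup.zpowers σ)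
    (τ : Fˣ) (hτ : τ = σ ^ (q - 1))
    (G : Type*) [Group G] [Fintype G]
    (ι : F → G) (hι : ∀ x y : F, ι (x + y) = ι x * ι y)
    (hinj : Function.Injective ι)
    (t : G) (hconj : ∀ x : F, t * ι x * t⁻¹ = ι ((τ : F) * x))
    (horder : orderOf t = l)
    (hcardG : Fintype.card G = q ^ r * l)
    (hdecomp : ∀ g : G, ∃ (x : F) (i : ℕ), i < l ∧ g = ι x * t ^ i)
    (A : Fin l → Submodule K F)
    (hA : ∀ i, Module.finrank K (A i) = r - 1)
    (hAinj : Function.Injective A)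
    (hAall : ∀ W : Submodule K F, Module.finrank K W = r - 1 → ∃ i, A i = W)
    (X1 X2 X3 X4 S : Set G)
    (hX1 : X1 = ι '' ((A ⟨0, hlpos⟩ : Set F) \ {0}))
    (hX2 : X2 = ι '' ((Set.univ : Set F) \ (A ⟨0, hlpos⟩ : Set F)))
    (hX3 : X3 = {g : G | ∃ i : Fin l, (i : ℕ) ≠ 0 ∧
      ∃ y ∈ (A i : Set F), g = ι y * t ^ (i : ℕ)})
    (hX4 : X4 = {g : G | ∃ i : Fin l, (i : ℕ) ≠ 0 ∧
      ∃ y ∈ ((Set.univ : Set F) \ (A i : Set F)), g = ι y * t ^ (i : ℕ)})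
    (hS : S = {g : G | ∃ i : Fin l,
      ∃ y ∈ ((Set.univ : Set F) \ (A i : Set F)), g = ι y * t ^ (i : ℕ)})
    (hSinv : S⁻¹ = S) :
    ({(1 : G)} : Set G)⁻¹ = {(1 : G)} ∧ X1⁻¹ = X1 ∧ X2⁻¹ = X2 ∧ X3⁻¹ = X3 ∧ X4⁻¹ = X4 ∧
    (∀ a b : MonoidAlgebra ℤ G,
      a ∈ Submodule.span ℤ ({underline {(1 : G)}, underline X1, underline X2,
        underline X3, underline X4} : Set (MonoidAlgebra ℤ G)) →
      b ∈ Submodule.span ℤ ({underline {(1 : G)}, underline X1, underline X2,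
        underline X3, underline X4} : Set (MonoidAlgebra ℤ G)) →
      a * b ∈ Submodule.span ℤ ({underline {(1 : G)}, underline X1, underline X2,
        underline X3, underline X4} : Set (MonoidAlgebra ℤ G))) ∧
    {g : G | (fun x => g * x) '' X3 = X3} = {(1 : G)} ∧
    {g : G | (fun x => g * x) '' X4 = X4} = {(1 : G)} := by
  subst horder hrank
  have ht : IsOfFinOrder t := isOfFinOrder_of_finite t
  have : FiniteDimensional K F := .of_finrank_pos (by omega)
  let f : Multiplicative F →* G := MonoidHom.mk' (fun x ↦ ι x.toAdd) fun x y ↦ hι x.toAdd y.toAdd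
  have : f.range.Normal := normal_of_forall_conj_mem (t := t)
    (fun g ↦ let ⟨x, i, _, h⟩ := hdecomp g; ⟨ι x, ⟨.ofAdd x, rfl⟩, i, h⟩)
    (by rintro _ ⟨x, rfl⟩; exact ⟨.ofAdd ((τ : F) * x.toAdd), (hconj x.toAdd).symm⟩)
  have hbij := bijective_mul_zpowers (f := ι) ht
    (fun g ↦ let ⟨x, i, _, h⟩ := hdecomp g; ⟨x, i, h⟩)
    (by rw [Nat.card_eq_fintype_card, Nat.card_eq_fintype_card, hcardG, hcardF])
  have hrange : Set.range A = {W | IsCoatom W} := by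
    rw [setOf_isCoatom_eq (by omega)]
    exact (Set.range_subset_iff.2 hA).antisymm hAall
  have hzero : (finEquivZPowers ht).symm 1 = ⟨0, hlpos⟩ :=
    Fin.ext ((val_finEquivZPowers_symm_eq_zero_iff ht).2 rfl)
  rw [← hzero] at hX1 hX2
  rw [setOf_exists_ne_zero_mul_pow_eq ht ι fun i ↦ (A i : Set F)] at hX3
  rw [setOf_exists_ne_zero_mul_pow_eq ht ι fun i ↦ Set.univ \ (A i : Set F)] at hX4
  rw [setOf_exists_mul_pow_eq ht ι fun i ↦ Set.univ \ (A i : Set F)] at hS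
  exact sring_of_hyperplane_ordering_general hr f (Subgroup.zpowers t).subtype hbij
    (A ∘ (finEquivZPowers ht).symm) (hAinj.comp (Equiv.injective _))
    (((Equiv.surjective _).range_comp A).trans hrange) X1 X2 X3 X4 S hX1 hX2 hX3 hX4 hS hSinv
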